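/- Let N be an odd perfect number with at least two distinct prime divisors, and let b and c denote respectively its second largest and largest prime divisors. If b ∥ N and c² ∥ N, then bc ≤ (2N)^(2/5), i.e., (bc)^5 ≤ (2N)^2. -/

import Mathlib

/-!
Write `N = c ^ k * (a * m)` with pairwise coprime factors. Since `σ(c ^ k) = 1 + c + ⋯ + c ^ k` is
prime to `c`, the equation `σ(c ^ k) σ(a) σ(m) = 2 N` forces `c ^ k ∣ σ(m)` as soon as `c` does not
divide `σ(a)`, while `σ(m) ≤ 2 * m` because a divisor of a perfect number is never abundant.
With `k = 2` and `a = b` prime this gives `c ^ 2 ≤ 2 * m`, hence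
`(b * c) ^ 5 ≤ b ^ 2 * c ^ 8 ≤ (b * c ^ 2 * (2 * m)) ^ 2 = (2 * N) ^ 2`.
Here `c` does not divide `σ(b) = b + 1`: otherwise `b = 2` and `c = 3`, and the abundant number `18`
would divide `N`.
-/

open scoped ArithmeticFunction.sigma

theorem lt_of_card_filter_lt_card_filter {α : Type*} [LinearOrder α] {s : Finset α} {a b : α}
    (h : (s.filter (b < ·)).card < (s.filter (a < ·)).card) : a < b := by
  contrapose! h
  exact Finset.card_le_card (Finset.monotone_filter_right s fun _ _ hx ↦ h.trans_lt hx)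

theorem coprime_of_not_pow_succ_dvd_pow_mul {p k n : ℕ} (hp : p.Prime)
    (h : ¬ p ^ (k + 1) ∣ p ^ k * n) : p.Coprime n :=
  hp.coprime_iff_not_dvd.2 fun hpn ↦ h (pow_succ p k ▸ Nat.mul_dvd_mul_left (p ^ k) hpn)

theorem coprime_sigma_one_pow {p : ℕ} (hp : p.Prime) (k : ℕ) : p.Coprime (σ 1 (p ^ k)) := by
  rw [ArithmeticFunction.sigma_one_apply_prime_pow hp, Finset.sum_range_succ']
  simp only [pow_succ', ← Finset.mul_sum, pow_zero]
  simp

theorem sigma_one_eq_two_mul_of_perfect {N : ℕ} (hN : N.Perfect) : σ 1 N = 2 * N := by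
  rw [ArithmeticFunction.sigma_one_apply, (Nat.perfect_iff_sum_divisors_eq_two_mul hN.2).1 hN]

theorem not_abundant_of_dvd_perfect {N d : ℕ} (hN : N.Perfect) (hd : d ∣ N) : ¬ d.Abundant :=
  fun h ↦ ((Nat.perfect_iff_not_abundant_and_not_deficient hN.2.ne).1 hN).1 (h.of_dvd hd hN.2.ne')

theorem sigma_one_le_two_mul_of_dvd_perfect {N d : ℕ} (hN : N.Perfect) (hd : d ∣ N) :
    σ 1 d ≤ 2 * d := by
  simpa only [Nat.abundant_iff_sum_divisors, ← ArithmeticFunction.sigma_one_apply, not_lt]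
    using not_abundant_of_dvd_perfect hN hd

theorem prime_pow_dvd_sigma_one_of_perfect {c k n : ℕ} (hc : c.Prime) (hcn : c.Coprime n)
    (hN : (c ^ k * n).Perfect) : c ^ k ∣ σ 1 n := by
  have hσ : σ 1 (c ^ k) * σ 1 n = 2 * (c ^ k * n) := by
    rw [← ArithmeticFunction.isMultiplicative_sigma.map_mul_of_coprime (hcn.pow_left k),
      sigma_one_eq_two_mul_of_perfect hN]
  refine ((coprime_sigma_one_pow hc k).pow_left k).dvd_of_dvd_mul_left ?_
  exact hσ ▸ (Nat.dvd_mul_right _ n).mul_left 2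

theorem prime_pow_le_two_mul_of_perfect {a c k m : ℕ} (hc : c.Prime) (hcn : c.Coprime (a * m))
    (ham : a.Coprime m) (hca : c.Coprime (σ 1 a)) (hN : (c ^ k * (a * m)).Perfect) :
    c ^ k ≤ 2 * m := by
  have hm : m ≠ 0 := by
    rintro rfl
    simpa only [mul_zero, lt_irrefl] using hN.2
  have hdvd : c ^ k ∣ σ 1 m := by
    refine (hca.pow_left k).dvd_of_dvd_mul_left ?_
    rw [← ArithmeticFunction.isMultiplicative_sigma.map_mul_of_coprime ham]
    exact prime_pow_dvd_sigma_one_of_perfect hc hcn hN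
  calc c ^ k ≤ σ 1 m := Nat.le_of_dvd (ArithmeticFunction.sigma_pos 1 m hm) hdvd
    _ ≤ 2 * m := sigma_one_le_two_mul_of_dvd_perfect hN ((Nat.dvd_mul_left m a).mul_left _)

theorem eq_two_of_prime_of_prime_add_one {p : ℕ} (hp : p.Prime) (hp' : (p + 1).Prime) : p = 2 := by
  refine hp.eq_two_or_odd'.resolve_right fun hodd ↦ ?_
  have hp1 : p + 1 = 2 := hp'.even_iff.1 hodd.add_one
  exact hp.ne_one (by lia)

theorem coprime_add_one_of_perfect {N b c : ℕ} (hN : N.Perfect) (hb : b.Prime) (hc : c.Prime)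
    (hbc : b < c) (hbN : b ∣ N) (hcN : c ^ 2 ∣ N) : c.Coprime (b + 1) := by
  refine Nat.coprime_of_lt_prime b.succ_ne_zero (Nat.lt_of_le_of_ne hbc ?_) hc
  rintro rfl
  obtain rfl := eq_two_of_prime_of_prime_add_one hb hc
  have h18 : 2 * 3 ^ 2 ∣ N := Nat.Coprime.mul_dvd_of_dvd_of_dvd (by norm_num) hbN hcN
  exact not_abundant_of_dvd_perfect hN h18 (by decide)

theorem stmt_18_general {N b c : ℕ} (hN : N.Perfect) (hb : b.Prime) (hc : c.Prime) (hbc : b < c)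
    (hbN : b ∣ N) (hbN' : ¬ b ^ 2 ∣ N) (hcN : c ^ 2 ∣ N) (hcN' : ¬ c ^ 3 ∣ N) :
    (b * c) ^ 5 ≤ (2 * N) ^ 2 := by
  have hσb : c.Coprime (σ 1 b) := by
    have hb1 := coprime_add_one_of_perfect hN hb hc hbc hbN hcN
    rwa [ArithmeticFunction.sigma_one_apply, hb.sum_divisors]
  have hbc_coprime : b.Coprime (c ^ 2) := ((Nat.coprime_primes hb hc).2 hbc.ne).pow_right 2
  obtain ⟨n, rfl⟩ := hcN
  obtain ⟨m, rfl⟩ := hbc_coprime.dvd_of_dvd_mul_left hbN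
  have hcn : c.Coprime (b * m) := coprime_of_not_pow_succ_dvd_pow_mul hc hcN'
  have hbm : b.Coprime m := coprime_of_not_pow_succ_dvd_pow_mul (k := 1) hb fun h ↦
    hbN' ((pow_one b ▸ h).mul_left (c ^ 2))
  have hcm : c ^ 2 ≤ 2 * m := prime_pow_le_two_mul_of_perfect hc hcn hbm hσb hN
  calc (b * c) ^ 5 = b ^ 2 * c ^ 4 * (b ^ 3 * c) := by ring
    _ ≤ b ^ 2 * c ^ 4 * (c ^ 3 * c) := by gcongr
    _ = b ^ 2 * c ^ 4 * (c ^ 2) ^ 2 := by ring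
    _ ≤ b ^ 2 * c ^ 4 * (2 * m) ^ 2 := by gcongr
    _ = (2 * (c ^ 2 * (b * m))) ^ 2 := by ring

/-- Let N be an odd perfect number with at least two distinct
prime divisors, with c its largest and b its second largest prime divisor.
If b ∥ N and c² ∥ N, then bc ≤ (2N)^(2/5), i.e., (bc)^5 ≤ (2N)^2. -/
theorem stmt_18 (N : ℕ) (hodd : Odd N) (hperf : Nat.Perfect N)
    (hk : 2 ≤ N.primeFactors.card)
    (b c : ℕ)
    (hb : b ∈ N.primeFactors) (hc : c ∈ N.primeFactors)
    (hb1 : (N.primeFactors.filter (fun q => b < q)).card = 1)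
    (hc0 : (N.primeFactors.filter (fun q => c < q)).card = 0)
    (hbN : b ∣ N ∧ ¬ b ^ 2 ∣ N)
    (hcN : c ^ 2 ∣ N ∧ ¬ c ^ 3 ∣ N) :
    (b * c) ^ 5 ≤ (2 * N) ^ 2 := by
  have hbc : b < c := lt_of_card_filter_lt_card_filter (s := N.primeFactors) <| by
    rw [hb1, hc0]
    exact one_pos
  exact stmt_18_general hperf (Nat.prime_of_mem_primeFactors hb) (Nat.prime_of_mem_primeFactors hc)
    hbc hbN.1 hbN.2 hcN.1 hcN.2
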